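/- arXiv:math/0606212 — 6 statements merged into one kernel-verified Lean document; each statement's English description precedes it below -/
import Mathlib

section
/- Every orbit of the group of bijections of ℤ^n(s) generated by σ_0, σ_1, …, σ_{n−1} contains exactly one element of A_{n,l}(s); that is, A_{n,l}(s) is a fundamental domain for this action. -/
/-!
Each `σ_i` exchanges two entries of `v`, adding a shift `e` to one and subtracting it from the other
(`e = 0` for `i ≥ 1`, `e = l` for `i = 0`); see `sigmaMove_spec`.

*Existence.* The moves are the reflections in the walls of the alcove `A_{n,l}(s)`, and the point
with coordinates `-j / n` (`j = 0, …, n - 1`) lies strictly inside all these walls. Reflecting a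
point that is on the wrong side of a wall strictly decreases its distance to this point. Hence an
element of the orbit minimizing `alcoveDist v = ∑ (n v_j + j)²` lies in `A_{n,l}(s)`.

*Uniqueness.* For every `t`, the sum `∑ ⌊(v_j - t) / l⌋` is constant on orbits. If `x, y` lie in the
alcove and `y_j < x_j =: t`, then `⌊(y_i - t) / l⌋ ≤ ⌊(x_i - t) / l⌋` for all `i`: for
`i < j` the left side is at most `0` and the right side at least `0`, for `i > j` they are at most
`-1` and at least `-1`, and for `i = j` the inequality is strict. So the invariants of `x` and `y` at
`t` differ, and `x, y` are in different orbits.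
-/

/-- The bijection `σ_i` of `ℤ^n(s)` (entries 0-indexed): `σ_0` sends `(s_1,…,s_n)` to
`(s_n + c, s_2, …, s_{n−1}, s_1 − c)`, and for `1 ≤ i ≤ n−1`, `σ_i` swaps the `i`-th
and `(i+1)`-th entries.  Here `c` is the shift (equal to `l` in the application). -/
def sigmaMove (d : ℕ) (c : ℤ) (i : Fin d) (v : Fin d → ℤ) : Fin d → ℤ := fun j =>
  if i.val = 0 then
    (if j.val = 0 then v ⟨d - 1, by have := j.isLt; omega⟩ + c
     else if j.val = d - 1 then v ⟨0, by have := j.isLt; omega⟩ - c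
     else v j)
  else
    (if j.val + 1 = i.val then v i
     else if j.val = i.val then v ⟨i.val - 1, by have := i.isLt; omega⟩
     else v j)

/-- Every move exchanges two entries up to a shift `e`: either the entries `i - 1` and `i` with
`e = 0`, or the first and the last entry with `e = c`. -/
lemma sigmaMove_spec {n : ℕ} (hn : 2 ≤ n) (c : ℤ) (i : Fin n) (v : Fin n → ℤ) :
    ∃ (p q : Fin n) (e : ℤ), p ≠ q ∧
      ((0 < i.val ∧ p.val + 1 = i.val ∧ q = i ∧ e = 0) ∨
        (i.val = 0 ∧ p.val = 0 ∧ q.val = n - 1 ∧ e = c)) ∧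
      sigmaMove n c i v p = v q + e ∧ sigmaMove n c i v q = v p - e ∧
      ∀ j, j ≠ p ∧ j ≠ q → sigmaMove n c i v j = v j := by
  have hi := i.isLt
  rcases Nat.eq_zero_or_pos i.val with h | h
  · refine ⟨⟨0, by omega⟩, ⟨n - 1, by omega⟩, c, ?_, Or.inr ⟨h, rfl, rfl, rfl⟩, ?_, ?_, ?_⟩
    · simp only [ne_eq, Fin.mk.injEq]; omega
    · simp [sigmaMove, h]
    · have : n - 1 ≠ 0 := by omega
      simp [sigmaMove, h, this]
    · rintro j ⟨h0, h1⟩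
      have h0' : j.val ≠ 0 := fun hh => h0 (Fin.ext hh)
      have h1' : j.val ≠ n - 1 := fun hh => h1 (Fin.ext hh)
      simp only [sigmaMove, if_pos h, if_neg h0', if_neg h1']
  · have h' : i.val ≠ 0 := by omega
    refine ⟨⟨i.val - 1, by omega⟩, i, 0, ?_, Or.inl ⟨h, ?_, rfl, rfl⟩, ?_, ?_, ?_⟩
    · intro hh
      have := congrArg Fin.val hh
      simp only at this
      omega
    · simp only; omega
    · have : i.val - 1 + 1 = i.val := by omega
      simp only [sigmaMove, if_neg h', if_pos this, add_zero]
    · have : ¬ (i.val + 1 = i.val) := by omega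
      simp only [sigmaMove, if_neg h', if_neg this, if_true, sub_zero]
    · rintro j ⟨h0, h1⟩
      have h0' : ¬ (j.val + 1 = i.val) := fun hh => h0 (Fin.ext (by simp only; omega))
      have h1' : j.val ≠ i.val := fun hh => h1 (Fin.ext hh)
      simp only [sigmaMove, if_neg h', if_neg h0', if_neg h1']

lemma sum_sub_of_eq_off_pair {n : ℕ} (G : Fin n → ℤ → ℤ) (v w : Fin n → ℤ) (p q : Fin n)
    (hpq : p ≠ q) (h : ∀ j, j ≠ p ∧ j ≠ q → w j = v j) :
    ∑ j, G j (w j) - ∑ j, G j (v j)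
      = (G p (w p) - G p (v p)) + (G q (w q) - G q (v q)) := by
  rw [← Finset.sum_sub_distrib]
  exact Fintype.sum_eq_add p q hpq fun j hj => by rw [h j hj, sub_self]

/-- A coordinatewise sum is invariant under the moves if a shift by `c` changes the summand
function by a constant `d`. -/
lemma sum_sigmaMove {n : ℕ} (hn : 2 ≤ n) (c d : ℤ) (φ : ℤ → ℤ) (hφ : ∀ x, φ (x + c) = φ x + d)
    (i : Fin n) (v : Fin n → ℤ) :
    ∑ j, φ (sigmaMove n c i v j) = ∑ j, φ (v j) := by
  obtain ⟨p, q, e, hpq, he, hp, hq, ho⟩ := sigmaMove_spec hn c i v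
  have key := sum_sub_of_eq_off_pair (fun _ => φ) v _ p q hpq ho
  simp only [hp, hq] at key
  rcases he with ⟨-, -, -, rfl⟩ | ⟨-, -, -, rfl⟩
  · simp only [add_zero, sub_zero] at key
    linarith
  · have h1 := hφ (v q)
    have h2 := hφ (v p - e)
    rw [sub_add_cancel] at h2
    linarith

lemma sum_eq_of_eqvGen {n : ℕ} (hn : 2 ≤ n) (c d : ℤ) (φ : ℤ → ℤ)
    (hφ : ∀ x, φ (x + c) = φ x + d) {v w : Fin n → ℤ}
    (h : Relation.EqvGen (fun x y => ∃ i : Fin n, y = sigmaMove n c i x) v w) :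
    ∑ j, φ (w j) = ∑ j, φ (v j) := by
  induction h with
  | rel x y h => obtain ⟨i, rfl⟩ := h; exact sum_sigmaMove hn c d φ hφ i x
  | refl x => rfl
  | symm x y _ ih => exact ih.symm
  | trans x y z _ _ ih₁ ih₂ => exact ih₂.trans ih₁

/-- `n²` times the squared Euclidean distance from `v` to the point with coordinates `-j / n`
(`0 ≤ j < n`), which lies strictly on the inner side of every wall of the alcove. -/
def alcoveDist (n : ℕ) (v : Fin n → ℤ) : ℤ := ∑ j : Fin n, ((n : ℤ) * v j + (j.val : ℤ)) ^ 2

lemma alcoveDist_nonneg (n : ℕ) (v : Fin n → ℤ) : 0 ≤ alcoveDist n v :=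
  Finset.sum_nonneg fun _ _ => sq_nonneg _

/-- Reflecting in a wall `v_k = v_{k+1}` from its wrong side decreases the distance. -/
lemma alcoveDist_swap_lt {n : ℕ} (hn : 2 ≤ n) (c : ℤ) (v : Fin n → ℤ) (k : ℕ) (hk : k + 1 < n)
    (h : v ⟨k, by omega⟩ < v ⟨k + 1, hk⟩) :
    alcoveDist n (sigmaMove n c ⟨k + 1, hk⟩ v) < alcoveDist n v := by
  obtain ⟨p, q, e, hpq, he, hp, hq, ho⟩ := sigmaMove_spec hn c ⟨k + 1, hk⟩ v
  have key := sum_sub_of_eq_off_pair (fun j x => ((n : ℤ) * x + (j.val : ℤ)) ^ 2) v _ p q hpq ho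
  simp only [hp, hq] at key
  rcases he with ⟨-, h1, rfl, rfl⟩ | ⟨h0, -⟩
  · have hpk : p = ⟨k, by omega⟩ := Fin.ext (by simp only at h1 ⊢; omega)
    rw [hpk] at key
    have hn' : (0 : ℤ) < n := by omega
    have := mul_pos hn' (sub_pos.2 h)
    simp only [alcoveDist]
    push_cast at key
    nlinarith
  · simp at h0

/-- Reflecting in the affine wall `v_1 - v_n = c` from its wrong side decreases the distance. -/
lemma alcoveDist_affine_lt {n : ℕ} (hn : 2 ≤ n) (c : ℤ) (hc : 1 ≤ c) (v : Fin n → ℤ)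
    (h : c < v ⟨0, by omega⟩ - v ⟨n - 1, by omega⟩) :
    alcoveDist n (sigmaMove n c ⟨0, by omega⟩ v) < alcoveDist n v := by
  obtain ⟨p, q, e, hpq, he, hp, hq, ho⟩ := sigmaMove_spec hn c ⟨0, by omega⟩ v
  have key := sum_sub_of_eq_off_pair (fun j x => ((n : ℤ) * x + (j.val : ℤ)) ^ 2) v _ p q hpq ho
  simp only [hp, hq] at key
  rcases he with ⟨h0, -⟩ | ⟨-, h1, h2, rfl⟩
  · simp at h0
  · have hp0 : p = ⟨0, by omega⟩ := Fin.ext h1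
    have hq0 : q = ⟨n - 1, by omega⟩ := Fin.ext h2
    rw [hp0, hq0] at key
    have hn' : (0 : ℤ) < n := by omega
    -- The change of the distance is `-2 n D (n e - n + 1)`, where `D = v_1 - v_n - e > 0`.
    have hk : (0 : ℤ) < n * e - n + 1 := by nlinarith
    have := mul_pos (mul_pos hn' (sub_pos.2 h)) hk
    have hcast : ((n - 1 : ℕ) : ℤ) = (n : ℤ) - 1 := by omega
    simp only [alcoveDist]
    simp only [hcast, Nat.cast_zero] at key
    nlinarith

/-- Separation of alcove points by the invariants `∑ ⌊(x_i - t) / c⌋`, with `t = x_j`. -/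
lemma le_of_sum_ediv_eq {n : ℕ} (hn : 2 ≤ n) (c : ℤ) (hc : 1 ≤ c) (x y : Fin n → ℤ)
    (hx : ∀ i j : Fin n, i ≤ j → x j ≤ x i) (hx' : x ⟨0, by omega⟩ - x ⟨n - 1, by omega⟩ ≤ c)
    (hy : ∀ i j : Fin n, i ≤ j → y j ≤ y i) (hy' : y ⟨0, by omega⟩ - y ⟨n - 1, by omega⟩ ≤ c)
    (h : ∀ t : ℤ, ∑ i, (x i - t) / c = ∑ i, (y i - t) / c) (j : Fin n) : x j ≤ y j := by
  by_contra! hlt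
  have hc0 : 0 < c := by omega
  have first (i : Fin n) : (⟨0, by omega⟩ : Fin n) ≤ i := by simp [Fin.le_def]
  have last (i : Fin n) : i ≤ (⟨n - 1, by omega⟩ : Fin n) := by
    have := i.isLt
    simp only [Fin.le_def]; omega
  have hyneg (i : Fin n) (hji : j ≤ i) : (y i - x j) / c ≤ -1 := by
    have h1 := hy j i hji
    have : (y i - x j) / c < 0 := Int.ediv_neg_of_neg_of_pos (by omega) hc0
    omega
  have hxnonneg (i : Fin n) (hij : i ≤ j) : 0 ≤ (x i - x j) / c :=
    Int.ediv_nonneg (by have := hx i j hij; omega) hc0.le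
  refine absurd (h (x j)) (ne_of_gt (Finset.sum_lt_sum (fun i _ => ?_) ⟨j, Finset.mem_univ _, ?_⟩))
  · rcases le_total i j with hij | hji
    · refine le_trans ?_ (hxnonneg i hij)
      have h1 := hy _ _ (first i)
      have h2 := hy _ _ (last j)
      have : (y i - x j) / c < 1 := Int.ediv_lt_of_lt_mul hc0 (by omega)
      omega
    · refine (hyneg i hji).trans ?_
      have h1 := hx _ _ (last i)
      have h2 := hx _ _ (first j)
      exact Int.le_ediv_of_mul_le hc0 (by omega)
  · have := hyneg j le_rfl
    have := hxnonneg j le_rfl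
    omega

/-- `A_{n,l}(s)` is a fundamental domain for the action on `ℤ^n(s)` of the group of
bijections generated by `σ_0, …, σ_{n−1}`: every orbit contains exactly one element
`r` with `r_1 ≥ ⋯ ≥ r_n` and `r_1 − r_n ≤ l`.  (Each `σ_i` is an involution, so the
orbits are the classes of the equivalence generated by the moves `x ↦ σ_i x`.) -/
theorem stmt_2 (n l : ℕ) (hn : 2 ≤ n) (hl : 2 ≤ l) (s : ℤ)
    (v : Fin n → ℤ) (hv : ∑ i, v i = s) :
    ∃! r : Fin n → ℤ,
      ((∑ i, r i = s) ∧ (∀ i j : Fin n, i ≤ j → r j ≤ r i) ∧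
        r ⟨0, by omega⟩ - r ⟨n - 1, by omega⟩ ≤ (l : ℤ)) ∧
      Relation.EqvGen (fun x y => ∃ i : Fin n, y = sigmaMove n (l : ℤ) i x) v r := by
  have hl1 : (1 : ℤ) ≤ l := by omega
  obtain ⟨r, hr, hmin⟩ := (measure fun w => (alcoveDist n w).toNat).wf.has_min
    {w | Relation.EqvGen (fun x y => ∃ i : Fin n, y = sigmaMove n (l : ℤ) i x) v w}
    ⟨v, Relation.EqvGen.refl v⟩
  have hmin' (i : Fin n) : ¬ alcoveDist n (sigmaMove n l i r) < alcoveDist n r := by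
    intro hlt
    refine hmin _ (Relation.EqvGen.trans _ _ _ hr (Relation.EqvGen.rel _ _ ⟨i, rfl⟩)) ?_
    have h0 := alcoveDist_nonneg n (sigmaMove n l i r)
    change (alcoveDist n (sigmaMove n l i r)).toNat < (alcoveDist n r).toNat
    omega
  have hsort : ∀ i j : Fin n, i ≤ j → r j ≤ r i := by
    rintro ⟨a, ha⟩ ⟨b, hb⟩ hab
    rw [Fin.mk_le_mk] at hab
    induction b, hab using Nat.le_induction with
    | base => exact le_rfl
    | succ k hk ih =>
      refine le_trans ?_ (ih (by omega))
      by_contra! hlt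
      exact hmin' _ (alcoveDist_swap_lt hn l r k hb hlt)
  have hwidth : r ⟨0, by omega⟩ - r ⟨n - 1, by omega⟩ ≤ (l : ℤ) := by
    by_contra! hlt
    exact hmin' _ (alcoveDist_affine_lt hn l hl1 r hlt)
  refine ⟨r, ⟨⟨(sum_eq_of_eqvGen hn l l id (fun _ => rfl) hr).trans hv, hsort, hwidth⟩, hr⟩, ?_⟩
  rintro y ⟨⟨-, hy, hy'⟩, hvy⟩
  have hinv (t : ℤ) : ∑ i, (r i - t) / (l : ℤ) = ∑ i, (y i - t) / (l : ℤ) := by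
    have hshift (x : ℤ) : (x + l - t) / (l : ℤ) = (x - t) / (l : ℤ) + 1 := by
      rw [add_sub_right_comm, Int.add_ediv_of_dvd_right (dvd_refl _), Int.ediv_self (by omega)]
    have h1 := sum_eq_of_eqvGen hn l 1 (fun x => (x - t) / (l : ℤ)) hshift hr
    have h2 := sum_eq_of_eqvGen hn l 1 (fun x => (x - t) / (l : ℤ)) hshift hvy
    exact h1.trans h2.symm
  funext j
  exact le_antisymm
    (le_of_sum_ediv_eq hn l hl1 y r hy hy' hsort hwidth (fun t => (hinv t).symm) j)
    (le_of_sum_ediv_eq hn l hl1 r y hsort hwidth hy hy' hinv j)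
end

section
/- For all s_l = (s_1,…,s_l) and t_l = (t_1,…,t_l) in ℤ^l(s) such that s_i ≡ t_i (mod n) for every 1 ≤ i ≤ l, there is a finite composition of the bijections τ̇_1, …, τ̇_{l−1} and their inverses mapping s_l to t_l; in other words, the group generated by τ̇_1, …, τ̇_{l−1} acts transitively on L_{s_l}. -/
/-!
The entries of `a` are corrected to those of `b` from left to right. If the current vector `x`
agrees with `b` before position `m` and `m + 1 < l`, then `b m - x m` is a multiple `n * z` of `n`,
and the `z`-th power of the `m`-th move (`reach_zpow`) corrects entry `m` while disturbing only
entry `m + 1`. Moves preserve the sum of the entries and their residues modulo `n`, so once the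
first `l - 1` entries are right, the equality of the sums forces the last one to be right as well.
-/

/-- The move `τ̇` acting on `ℤ^l` at (0-indexed) position `k`: it adds `c` to the `k`-th
entry and subtracts `c` from the `(k+1)`-th entry.  The bijection `τ̇_i` of the paper
(`1 ≤ i ≤ l−1`) is `tauMove l n (i−1)`, and its inverse is `tauMove l (−n) (i−1)`. -/
def tauMove (l : ℕ) (c : ℤ) (k : ℕ) (v : Fin l → ℤ) : Fin l → ℤ := fun j =>
  if j.val = k then v j + c else if j.val = k + 1 then v j - c else v j

theorem tauMove_add (l : ℕ) (c d : ℤ) (k : ℕ) (v : Fin l → ℤ) :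
    tauMove l c k (tauMove l d k v) = tauMove l (d + c) k v := by
  funext j
  simp only [tauMove]
  split_ifs <;> ring

theorem sum_tauMove (l : ℕ) (c : ℤ) (k : ℕ) (hk : k + 1 < l) (v : Fin l → ℤ) :
    ∑ i, tauMove l c k v i = ∑ i, v i := by
  have h : tauMove l c k v =
      v + (Pi.single ⟨k, by omega⟩ c - Pi.single ⟨k + 1, hk⟩ c) := by
    funext j
    simp only [tauMove, Pi.add_apply, Pi.sub_apply, Pi.single_apply, Fin.ext_iff]
    split_ifs <;> omega
  rw [h]
  simp [Finset.sum_add_distrib, Finset.sum_sub_distrib]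

/-- Every integer power of the `k`-th move is a finite composition of moves and inverses. -/
theorem reach_zpow (n l k : ℕ) (hk : k + 1 < l) (z : ℤ) (v : Fin l → ℤ) :
    Relation.ReflTransGen
      (fun x y => ∃ k : ℕ, k + 1 < l ∧
        (y = tauMove l (n : ℤ) k x ∨ y = tauMove l (-(n : ℤ)) k x))
      v (tauMove l (n * z) k v) := by
  induction z using Int.induction_on with
  | zero =>
    have h : tauMove l ((n : ℤ) * 0) k v = v := by
      funext j
      simp [tauMove]
    rw [h]
  | succ i ih =>
    refine ih.tail ⟨k, hk, Or.inl ?_⟩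
    rw [tauMove_add]
    congr 1
  | pred i ih =>
    refine ih.tail ⟨k, hk, Or.inr ?_⟩
    rw [tauMove_add]
    congr 1
    ring

/-- Left-to-right correction: the first `m` entries can be made equal to those of `b`,
for every `m ≤ l - 1`. -/
theorem reach_prefix (n l : ℕ) (a b : Fin l → ℤ)
    (hcong : ∀ i, a i ≡ b i [ZMOD (n : ℤ)]) (m : ℕ) (hm : m < l) :
    ∃ x : Fin l → ℤ, Relation.ReflTransGen
      (fun x y => ∃ k : ℕ, k + 1 < l ∧
        (y = tauMove l (n : ℤ) k x ∨ y = tauMove l (-(n : ℤ)) k x)) a x ∧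
      ∑ i, x i = ∑ i, a i ∧ (∀ i, x i ≡ b i [ZMOD (n : ℤ)]) ∧
      ∀ i : Fin l, i.val < m → x i = b i := by
  induction m with
  | zero => exact ⟨a, .refl, rfl, hcong, fun i hi => absurd hi (by omega)⟩
  | succ m ih =>
    obtain ⟨x, hx, hsum, hc, hag⟩ := ih (by omega)
    obtain ⟨z, hz⟩ := (hc ⟨m, by omega⟩).dvd
    refine ⟨tauMove l (n * z) m x, hx.trans (reach_zpow n l m hm z x),
      (sum_tauMove l _ m hm x).trans hsum, fun i => ?_, fun i hi => ?_⟩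
    · refine Int.ModEq.trans ?_ (hc i)
      apply Int.ModEq.symm
      rw [Int.modEq_iff_dvd]
      simp only [tauMove]
      split_ifs
      · exact ⟨z, by ring⟩
      · exact ⟨-z, by ring⟩
      · simp
    · simp only [tauMove]
      split_ifs with h1 h2
      · have him : i = ⟨m, Nat.lt_of_succ_lt hm⟩ := Fin.ext h1
        rw [him, ← hz]
        ring
      · omega
      · exact hag i (by omega)

/-- If `s_l, t_l ∈ ℤ^l(s)` are componentwise congruent modulo `n`, then some finite
composition of the `τ̇_1, …, τ̇_{l−1}` and their inverses maps `s_l` to `t_l`: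
the group generated by the `τ̇_i` acts transitively on `L_{s_l}`. -/
theorem stmt_3 (n l : ℕ) (hn : 2 ≤ n) (hl : 2 ≤ l) (s : ℤ)
    (a b : Fin l → ℤ) (ha : ∑ i, a i = s) (hb : ∑ i, b i = s)
    (hcong : ∀ i, a i ≡ b i [ZMOD (n : ℤ)]) :
    Relation.ReflTransGen
      (fun x y => ∃ k : ℕ, k + 1 < l ∧
        (y = tauMove l (n : ℤ) k x ∨ y = tauMove l (-(n : ℤ)) k x)) a b := by
  obtain ⟨x, hx, hsum, -, hag⟩ := reach_prefix n l a b hcong (l - 1) (by omega)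
  have hxb : x = b := by
    obtain ⟨p, rfl⟩ : ∃ p, l = p + 1 := ⟨l - 1, by omega⟩
    have hcast : ∀ i : Fin p, x i.castSucc = b i.castSucc := fun i => hag _ (by simp)
    have hs : ∑ i, x i = ∑ i, b i := by rw [hsum, ha, hb]
    rw [Fin.sum_univ_castSucc, Fin.sum_univ_castSucc, Finset.sum_congr rfl fun i _ => hcast i] at hs
    funext j
    exact Fin.lastCases (add_left_cancel hs) hcast j
  exact hxb ▸ hx
end

section
/- Suppose l ≥ 5 and 2 ≤ i ≤ l−3. Then, as bijections of ℤ^l(s), one has the factorization τ̇_i = σ̇_{i−1} ∘ σ̇_{i−2} ∘ ⋯ ∘ σ̇_1 ∘ σ̇_0 ∘ σ̇_{l−1} ∘ ⋯ ∘ σ̇_{i+2} ∘ σ̇_{i+1} ∘ σ̇_{i+2} ∘ ⋯ ∘ σ̇_{l−1} ∘ σ̇_0 ∘ σ̇_1 ∘ ⋯ ∘ σ̇_i, where composition is read right to left (the rightmost map is applied first). -/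
/-- Apply a word in the generators `σ̇_j` (given as a list of indices, read left to
right, the rightmost letter acting first). -/
def applyWord (l : ℕ) (hl : 0 < l) (c : ℤ) (w : List ℕ) (v : Fin l → ℤ) : Fin l → ℤ :=
  w.foldr (fun i u => sigmaMove l c ⟨i % l, Nat.mod_lt i hl⟩ u) v

theorem applyWord_append (l : ℕ) (hl : 0 < l) (c : ℤ) (w w' : List ℕ) (v : Fin l → ℤ) :
    applyWord l hl c (w ++ w') v = applyWord l hl c w (applyWord l hl c w' v) := by
  simp [applyWord, List.foldr_append]

theorem applyWord_singleton (l : ℕ) (hl : 0 < l) (c : ℤ) (a : ℕ) (ha : a < l) (v : Fin l → ℤ) :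
    applyWord l hl c [a] v = sigmaMove l c ⟨a, ha⟩ v := by
  simp [applyWord, Nat.mod_eq_of_lt ha]

/-- An ascending word rotates the 0-indexed positions `a - 1, …, a + m - 1` one step to the right,
the last entry going to the front. -/
theorem applyWord_asc (l : ℕ) (hl : 0 < l) (c : ℤ) (a m : ℕ) (ha : 1 ≤ a) (hm : a + m ≤ l)
    (v : Fin l → ℤ) (j : Fin l) :
    applyWord l hl c ((List.range m).map (fun k => a + k)) v j =
      if j.val + 1 = a then v ⟨a + m - 1, by omega⟩
      else if a ≤ j.val ∧ j.val < a + m then v ⟨j.val - 1, by omega⟩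
      else v j := by
  induction m generalizing v with
  | zero =>
    simp only [List.range_zero, List.map_nil, applyWord, List.foldr_nil]
    grind
  | succ m ih =>
    rw [List.range_succ, List.map_append, applyWord_append, ih (by omega), List.map_singleton,
      applyWord_singleton _ _ _ _ (by omega)]
    simp only [sigmaMove]
    grind

/-- A descending word rotates the 0-indexed positions `a - 1, …, a + m - 1` one step to the left,
the first entry going to the end. -/
theorem applyWord_desc (l : ℕ) (hl : 0 < l) (c : ℤ) (a m : ℕ) (ha : 1 ≤ a) (hm : a + m ≤ l)
    (v : Fin l → ℤ) (j : Fin l) :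
    applyWord l hl c ((List.range m).map (fun k => a + k)).reverse v j =
      if j.val + 1 = a + m then v ⟨a - 1, by omega⟩
      else if h : a ≤ j.val + 1 ∧ j.val + 1 < a + m then v ⟨j.val + 1, by omega⟩
      else v j := by
  induction m generalizing j with
  | zero =>
    simp only [List.range_zero, List.map_nil, List.reverse_nil, applyWord, List.foldr_nil]
    grind
  | succ m ih =>
    rw [List.range_succ, List.map_append, List.map_singleton, List.reverse_append,
      List.reverse_singleton, applyWord_append, applyWord_singleton _ _ _ _ (by omega)]
    simp only [sigmaMove, ih (by omega : a + m ≤ l)]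
    grind

/-- For `l ≥ 5` and `2 ≤ i ≤ l−3` (1-indexed), one has the factorization
`τ̇_i = σ̇_{i−1} ⋯ σ̇_1 σ̇_0 σ̇_{l−1} ⋯ σ̇_{i+2} σ̇_{i+1} σ̇_{i+2} ⋯ σ̇_{l−1} σ̇_0 σ̇_1 ⋯ σ̇_i`
as bijections of `ℤ^l(s)` (the rightmost map is applied first). -/
theorem stmt_4 (n l : ℕ) (hn : 2 ≤ n) (hl : 5 ≤ l) (s : ℤ)
    (i : ℕ) (hi1 : 2 ≤ i) (hi2 : i ≤ l - 3)
    (v : Fin l → ℤ) (hv : ∑ j, v j = s) :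
    applyWord l (by omega) (n : ℤ)
      ((List.range i).reverse ++
        ((List.range (l - 1 - i)).map (fun k => i + 1 + k)).reverse ++
        (List.range (l - 2 - i)).map (fun k => i + 2 + k) ++
        [0] ++
        (List.range i).map (fun k => k + 1)) v
      = tauMove l (n : ℤ) (i - 1) v := by
  have hl0 : 0 < l := by omega
  -- Split the final `σ̇_0` off the descending word `σ̇_{i-1} ⋯ σ̇_0`.
  have h1 : (List.range i).reverse =
      ((List.range (i - 1)).map (fun k => 1 + k)).reverse ++ [0] := by
    obtain ⟨p, rfl⟩ : ∃ p, i = p + 1 := ⟨i - 1, by omega⟩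
    rw [List.range_succ_eq_map]
    simp [Nat.succ_eq_add_one, Nat.add_comm]
  have h2 : (List.range i).map (fun k => k + 1) = (List.range i).map (fun k => 1 + k) := by
    simp [Nat.add_comm]
  rw [h1, h2]
  simp only [applyWord_append, applyWord_singleton l hl0 _ 0 hl0]
  funext j
  have hj := j.isLt
  rw [applyWord_desc _ _ _ _ _ (by omega) (by omega)]
  simp only [sigmaMove, if_true,
    applyWord_desc l hl0 _ (i + 1) (l - 1 - i) (by omega) (by omega),
    applyWord_asc l hl0 _ (i + 2) (l - 2 - i) (by omega) (by omega),
    applyWord_asc l hl0 _ 1 i (by omega) (by omega), tauMove]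
  grind
end

section
/- The graph Γ(1) is connected. -/
/-- Membership in the orbit `Ẇ_l·r` of `r` under the group generated by the
involutions `σ̇_0, …, σ̇_{l−1}`. -/
def inOrbit (n l : ℕ) (r v : Fin l → ℤ) : Prop :=
  Relation.EqvGen (fun x y => ∃ i : Fin l, y = sigmaMove l (n : ℤ) i x) r v

/-- The arrows of the graph `Γ(M)`: `s_l → t_l` whenever `t_l = σ̇_i.s_l` and
`s_i − s_{i+1} ≥ M` (with `s_0 := n + s_l` when `i = 0`). -/
def gammaStep (n l : ℕ) (M : ℤ) (x y : Fin l → ℤ) : Prop :=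
  ∃ i : Fin l, y = sigmaMove l (n : ℤ) i x ∧
    (if i.val = 0 then
       (n : ℤ) + x ⟨l - 1, by have := i.isLt; omega⟩ - x ⟨0, by have := i.isLt; omega⟩ ≥ M
     else x ⟨i.val - 1, by have := i.isLt; omega⟩ - x i ≥ M)

/-- Each application of a generator is an undirected path (of length at most one) in `Γ(1)`. -/
theorem eqvGen_gammaStep_sigmaMove (n l : ℕ) (hl : 2 ≤ l) (x : Fin l → ℤ) (i : Fin l) :
    Relation.EqvGen (gammaStep n l 1) x (sigmaMove l (n : ℤ) i x) := by
  have hi := i.isLt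
  -- `δ` is the quantity tested by the arrows of label `i`.
  obtain ⟨δ, hδ⟩ : ∃ δ : (Fin l → ℤ) → ℤ, δ = fun z =>
      if i.val = 0 then (n : ℤ) + z ⟨l - 1, by omega⟩ - z ⟨0, by omega⟩
      else z ⟨i.val - 1, by omega⟩ - z i := ⟨_, rfl⟩
  have arrow : ∀ z, 1 ≤ δ z → gammaStep n l 1 z (sigmaMove l (n : ℤ) i z) := by
    intro z hz
    refine ⟨i, rfl, ?_⟩
    rw [hδ] at hz
    by_cases h0 : i.val = 0
    · simpa [h0] using hz
    · simpa [h0] using hz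
  have invol : sigmaMove l (n : ℤ) i (sigmaMove l (n : ℤ) i x) = x := by
    funext j
    have hj := j.isLt
    simp only [sigmaMove]
    grind
  have neg : δ (sigmaMove l (n : ℤ) i x) = - δ x := by
    simp only [hδ, sigmaMove]
    grind
  have fixed : δ x = 0 → sigmaMove l (n : ℤ) i x = x := by
    intro h
    funext j
    have hj := j.isLt
    simp only [hδ] at h
    simp only [sigmaMove]
    grind
  rcases lt_trichotomy (δ x) 0 with h | h | h
  · have step := arrow (sigmaMove l (n : ℤ) i x) (by omega)
    rw [invol] at step
    exact .symm _ _ (.rel _ _ step)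
  · rw [fixed h]
    exact .refl _
  · exact .rel _ _ (arrow x (by omega))

/-- The graph `Γ(1)` is connected: any two vertices (elements of the orbit `Ẇ_l·r`)
are joined by an undirected path of arrows of `Γ(1)`. -/
theorem stmt_6 (n l : ℕ) (hn : 2 ≤ n) (hl : 2 ≤ l) (s : ℤ)
    (r : Fin l → ℤ)
    (hr : (∑ i, r i = s) ∧ (∀ i j : Fin l, i ≤ j → r j ≤ r i) ∧
          r ⟨0, by omega⟩ - r ⟨l - 1, by omega⟩ ≤ (n : ℤ))
    (v w : Fin l → ℤ) (hv : inOrbit n l r v) (hw : inOrbit n l r w) :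
    Relation.EqvGen (gammaStep n l 1) v w := by
  have lift : ∀ x y : Fin l → ℤ, inOrbit n l x y → Relation.EqvGen (gammaStep n l 1) x y := by
    intro x y h
    induction h with
    | rel x y h =>
      obtain ⟨i, rfl⟩ := h
      exact eqvGen_gammaStep_sigmaMove n l hl x i
    | refl x => exact .refl x
    | symm x y _ ih => exact .symm _ _ ih
    | trans x y z _ _ ih₁ ih₂ => exact .trans _ _ _ ih₁ ih₂
  exact .trans _ _ _ (.symm _ _ (lift r v hv)) (lift r w hw)
end

section
/- For every b ∈ ℝ^{l−1}, the set A(b) is nonempty. -/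
/-!
The vector `c = b - 2` works. Because the off-diagonal entries of the Cartan matrix are
nonpositive, `C_b` is closed under componentwise minima (`inf_mem_cone`), so it is enough to
connect an integer point `x` of `C_b` to an integer point `m ≤ x` of `C_b`. To do so, repeatedly
lower by one a coordinate `i` at which `x - m` is maximal (`reach_down`). At such a coordinate
`(A (x - m))_i ≥ 0`, because the row sums of `A` are nonnegative; hence the new value of `(A x)_i`
is at least `(A m)_i - 2 ≥ b_i - 2`, while all other entries of `A x` can only increase.
-/

/-- The Cartan matrix of `sl_l`: `A_{ii} = 2`, `A_{ij} = −1` if `|i−j| = 1`, `0` otherwise. -/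
def cartanA (l : ℕ) : Matrix (Fin (l - 1)) (Fin (l - 1)) ℝ :=
  Matrix.of fun i j => if i = j then 2 else if i.val + 1 = j.val ∨ j.val + 1 = i.val then -1 else 0

/-- The cone `C_b = {x ∈ ℝ^{l−1} : A·x ≥ b}` (inequalities componentwise). -/
def cone (l : ℕ) (b : Fin (l - 1) → ℝ) : Set (Fin (l - 1) → ℝ) :=
  {x | ∀ i, (cartanA l).mulVec x i ≥ b i}

/-- A point of `ℝ^d` with integer coordinates. -/
def IsIntPt {d : ℕ} (x : Fin d → ℝ) : Prop := ∀ i, ∃ z : ℤ, x i = (z : ℝ)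

/-- `x` and `y` are ℤ-connected in `D`: there is a finite sequence of integer points of
`D` from `x` to `y` whose consecutive differences are `±ε_j` for standard basis
vectors `ε_j`. -/
def ZConn {d : ℕ} (D : Set (Fin d → ℝ)) (x y : Fin d → ℝ) : Prop :=
  ∃ (N : ℕ) (p : ℕ → Fin d → ℝ), p 0 = x ∧ p N = y ∧
    (∀ k ≤ N, p k ∈ D ∧ IsIntPt (p k)) ∧
    ∀ k < N, ∃ j : Fin d,
      (p (k + 1) = fun m => p k m + if m = j then 1 else 0) ∨
      (p (k + 1) = fun m => p k m - if m = j then 1 else 0)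

/-- `A(b) = {c ≤ b : any two integer points of C_b are ℤ-connected in C_c}`. -/
def calA (l : ℕ) (b : Fin (l - 1) → ℝ) : Set (Fin (l - 1) → ℝ) :=
  {c | (∀ i, c i ≤ b i) ∧
    ∀ x y : Fin (l - 1) → ℝ, x ∈ cone l b → y ∈ cone l b →
      IsIntPt x → IsIntPt y → ZConn (cone l c) x y}

/-- `x` and `y` are integer points of `D` that differ by `±ε_j` for some `j`. -/
def ZStep {d : ℕ} (D : Set (Fin d → ℝ)) (x y : Fin d → ℝ) : Prop :=
  (x ∈ D ∧ IsIntPt x) ∧ (y ∈ D ∧ IsIntPt y) ∧ ∃ j : Fin d,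
    (y = fun m => x m + if m = j then 1 else 0) ∨ (y = fun m => x m - if m = j then 1 else 0)

lemma ZStep.symm {d : ℕ} {D : Set (Fin d → ℝ)} {x y : Fin d → ℝ} (h : ZStep D x y) :
    ZStep D y x := by
  obtain ⟨hx, hy, j, h | h⟩ := h
  · exact ⟨hy, hx, j, Or.inr (by ext m; simp [h])⟩
  · exact ⟨hy, hx, j, Or.inl (by ext m; simp [h])⟩

lemma zConn_of_reach {d : ℕ} {D : Set (Fin d → ℝ)} {x y : Fin d → ℝ}
    (hy : y ∈ D ∧ IsIntPt y) (h : Relation.ReflTransGen (ZStep D) x y) : ZConn D x y := by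
  induction h using Relation.ReflTransGen.head_induction_on with
  | refl => exact ⟨0, fun _ => y, rfl, rfl, fun _ _ => hy, fun k hk => absurd hk (by omega)⟩
  | @head u v huv _ ih =>
    obtain ⟨N, p, h0, hN, hp, hs⟩ := ih
    refine ⟨N + 1, fun k => Nat.casesOn k u p, rfl, hN, ?_, ?_⟩
    · rintro (_ | k) hk
      · exact huv.1
      · exact hp k (by omega)
    · rintro (_ | k) hk
      · simpa [h0] using huv.2.2
      · exact hs k (by omega)

lemma cartanA_diag (l : ℕ) (i : Fin (l - 1)) : cartanA l i i = 2 := by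
  simp [cartanA]

lemma cartanA_offdiag (l : ℕ) {i j : Fin (l - 1)} (h : i ≠ j) : cartanA l i j ≤ 0 := by
  simp only [cartanA, Matrix.of_apply, if_neg h]
  split_ifs <;> norm_num

lemma cartanA_rowsum (l : ℕ) (i : Fin (l - 1)) : 0 ≤ ∑ j, cartanA l i j := by
  have hcard : (Finset.univ.filter
      fun j : Fin (l - 1) => i.val + 1 = j.val ∨ j.val + 1 = i.val).card ≤ 2 := by
    rw [← Finset.card_map Fin.valEmbedding]
    refine (Finset.card_le_card (t := {i.val + 1, i.val - 1}) ?_).trans Finset.card_le_two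
    intro k hk
    simp only [Finset.mem_map, Finset.mem_filter, Finset.mem_univ, true_and,
      Fin.valEmbedding_apply] at hk
    obtain ⟨j, hj, rfl⟩ := hk
    simp only [Finset.mem_insert, Finset.mem_singleton]
    omega
  have heq : ∀ j, cartanA l i j = (if i = j then (2 : ℝ) else 0) -
      (if i.val + 1 = j.val ∨ j.val + 1 = i.val then 1 else 0) := by
    intro j
    simp only [cartanA, Matrix.of_apply]
    by_cases h : i = j
    · subst h; simp
    · simp only [if_neg h]; split_ifs <;> norm_num
  simp only [heq, Finset.sum_sub_distrib, Finset.sum_ite_eq, Finset.mem_univ, if_true,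
    Finset.sum_boole]
  have : ((Finset.univ.filter
      fun j : Fin (l - 1) => i.val + 1 = j.val ∨ j.val + 1 = i.val).card : ℝ) ≤ 2 := by
    exact_mod_cast hcard
  linarith

/-- Row `i` of `A` is monotone along changes that fix coordinate `i` and lower the others. -/
lemma mulVec_mono (l : ℕ) {x y : Fin (l - 1) → ℝ} {i : Fin (l - 1)}
    (hi : y i = x i) (h : ∀ j, y j ≤ x j) :
    (cartanA l).mulVec x i ≤ (cartanA l).mulVec y i := by
  simp only [Matrix.mulVec, dotProduct]
  refine Finset.sum_le_sum fun j _ => ?_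
  by_cases hj : i = j
  · subst hj; rw [hi]
  · exact mul_le_mul_of_nonpos_left (h j) (cartanA_offdiag l hj)

lemma inf_mem_cone (l : ℕ) {b x y : Fin (l - 1) → ℝ} (hx : x ∈ cone l b) (hy : y ∈ cone l b) :
    x ⊓ y ∈ cone l b := by
  intro i
  rcases le_total (x i) (y i) with h | h
  · exact (hx i).trans (mulVec_mono l (by simp [h]) fun j => by simp)
  · exact (hy i).trans (mulVec_mono l (by simp [h]) fun j => by simp)

/-- A discrete maximum principle: `(A x)_i ≥ (A m)_i` where the nonnegative `x - m` is maximal. -/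
lemma mulVec_le_of_max (l : ℕ) {m x : Fin (l - 1) → ℝ} {i : Fin (l - 1)}
    (h0 : m i ≤ x i) (hmax : ∀ j, x j - m j ≤ x i - m i) :
    (cartanA l).mulVec m i ≤ (cartanA l).mulVec x i := by
  have h1 : ∑ j, cartanA l i j * (x i - m i) ≤ ∑ j, cartanA l i j * (x j - m j) := by
    refine Finset.sum_le_sum fun j _ => ?_
    by_cases hj : i = j
    · subst hj; rfl
    · exact mul_le_mul_of_nonpos_left (hmax j) (cartanA_offdiag l hj)
  rw [← Finset.sum_mul] at h1
  have h2 := mul_nonneg (cartanA_rowsum l i) (sub_nonneg.2 h0)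
  simp only [mul_sub, Finset.sum_sub_distrib] at h1 h2
  simp only [Matrix.mulVec, dotProduct]
  linarith

lemma reach_down (l : ℕ) (b m : Fin (l - 1) → ℝ) (hm : m ∈ cone l b) (hmi : IsIntPt m) (n : ℕ) :
    ∀ x : Fin (l - 1) → ℝ, x ∈ cone l (fun i => b i - 2) → IsIntPt x → (∀ i, m i ≤ x i) →
      ∑ i, (x i - m i) ≤ n →
      Relation.ReflTransGen (ZStep (cone l fun i => b i - 2)) x m := by
  induction n with
  | zero =>
    intro x _ _ hle hs
    have hnn : ∀ i ∈ Finset.univ, 0 ≤ x i - m i := fun i _ => sub_nonneg.2 (hle i)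
    have h0 := (Finset.sum_eq_zero_iff_of_nonneg hnn).1
      (le_antisymm (by simpa using hs) (Finset.sum_nonneg hnn))
    have : x = m := funext fun i => sub_eq_zero.1 (h0 i (Finset.mem_univ i))
    rw [this]
  | succ n ih =>
    intro x hx hxi hle hs
    by_cases hxm : x = m
    · rw [hxm]
    obtain ⟨k, hk⟩ := Function.ne_iff.1 hxm
    obtain ⟨i, -, hi⟩ := Finset.exists_max_image Finset.univ (fun j => x j - m j)
      ⟨k, Finset.mem_univ k⟩
    have hmax : ∀ j, x j - m j ≤ x i - m i := fun j => hi j (Finset.mem_univ j)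
    have hlt : m i < x i := by
      have := lt_of_le_of_ne (hle k) (Ne.symm hk)
      linarith [hmax k]
    have hge : m i + 1 ≤ x i := by
      obtain ⟨u, hu⟩ := hmi i
      obtain ⟨v, hv⟩ := hxi i
      rw [hu, hv] at hlt ⊢
      exact_mod_cast hlt
    set x' : Fin (l - 1) → ℝ := fun j => x j - if j = i then 1 else 0 with hx'
    have hx'i : IsIntPt x' := by
      intro j
      obtain ⟨v, hv⟩ := hxi j
      by_cases hj : j = i
      · exact ⟨v - 1, by simp [hx', hj ▸ hv, hj]⟩
      · exact ⟨v, by simp [hx', hv, hj]⟩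
    have hx'c : x' ∈ cone l fun i => b i - 2 := by
      intro j
      by_cases hj : j = i
      · subst hj
        have h1 : (cartanA l).mulVec x' j = (cartanA l).mulVec x j - 2 := by
          simp [hx', Matrix.mulVec, dotProduct, mul_sub, Finset.sum_sub_distrib, cartanA_diag]
        have h2 := mulVec_le_of_max l (hle j) hmax
        have h3 := hm j
        change b j - 2 ≤ _
        linarith
      · refine (hx j).trans (mulVec_mono l (by simp [hx', hj]) fun k => ?_)
        simp only [hx']
        split_ifs <;> linarith
    have hle' : ∀ j, m j ≤ x' j := by
      intro j
      by_cases hj : j = i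
      · subst hj; simp [hx']; linarith
      · simpa [hx', hj] using hle j
    have hs' : ∑ j, (x' j - m j) ≤ n := by
      have : ∑ j, (x' j - m j) = ∑ j, (x j - m j) - 1 := by
        simp only [hx', Finset.sum_sub_distrib, Finset.sum_ite_eq', Finset.mem_univ, if_true]
        ring
      push_cast at hs
      linarith
    exact Relation.ReflTransGen.head ⟨⟨hx, hxi⟩, ⟨hx'c, hx'i⟩, i, Or.inr rfl⟩
      (ih x' hx'c hx'i hle' hs')

/-- For every `b ∈ ℝ^{l−1}`, the set `A(b)` is nonempty. -/
theorem stmt_10 (l : ℕ) (hl : 2 ≤ l) (b : Fin (l - 1) → ℝ) :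
    (calA l b).Nonempty := by
  refine ⟨fun i => b i - 2, fun i => by linarith, ?_⟩
  intro x y hx hy hxi hyi
  have hsub : ∀ z ∈ cone l b, z ∈ cone l fun i => b i - 2 := by
    intro z hz i
    have := hz i
    change b i - 2 ≤ _
    linarith
  have hmi : IsIntPt (x ⊓ y) := by
    intro i
    rcases le_total (x i) (y i) with h | h
    · simpa [h] using hxi i
    · simpa [h] using hyi i
  have key : ∀ z ∈ cone l b, IsIntPt z → (∀ i, (x ⊓ y) i ≤ z i) →
      Relation.ReflTransGen (ZStep (cone l fun i => b i - 2)) z (x ⊓ y) := by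
    intro z hz hzi hle
    obtain ⟨n, hn⟩ := exists_nat_ge (∑ i, (z i - (x ⊓ y) i))
    exact reach_down l b _ (inf_mem_cone l hx hy) hmi n z (hsub z hz) hzi hle hn
  refine zConn_of_reach ⟨hsub y hy, hyi⟩ ((key x hx hxi fun i => by simp).trans ?_)
  haveI : Std.Symm (ZStep (cone l fun i => b i - 2)) := ⟨fun _ _ h => h.symm⟩
  exact Std.Symm.symm _ _ (key y hy hyi fun i => by simp)
end

section
/- The sequence (m_M)_{M ∈ ℕ} is increasing, and for every M ∈ ℕ one has m_{nlM} = lM + m_0. -/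
/-- The vector `b(M; n, l, r)` with entries `b_i^{(M)} = (M + r_{i+1} − r_i)/n`. -/
noncomputable def bvec (n l : ℕ) (r : Fin l → ℤ) (M : ℤ) : Fin (l - 1) → ℝ := fun i =>
  ((M : ℝ) + (r ⟨i.val + 1, by have := i.isLt; omega⟩ : ℝ) -
    (r ⟨i.val, by have := i.isLt; omega⟩ : ℝ)) / (n : ℝ)

/-- The set of values `min_{1 ≤ i ≤ l−1} c_i`, where `c` ranges over the integer
points of `A(b)`. -/
def minSet (l : ℕ) (hl : 2 ≤ l) (b : Fin (l - 1) → ℝ) : Set ℤ :=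
  {v | ∃ c : Fin (l - 1) → ℤ, (fun i => (c i : ℝ)) ∈ calA l b ∧
        v = Finset.univ.inf' ⟨⟨0, by omega⟩, Finset.mem_univ _⟩ c}

lemma calA_mono {l : ℕ} {b b' : Fin (l - 1) → ℝ} (h : ∀ i, b i ≤ b' i) : calA l b ⊆ calA l b' :=
  fun _ hc => ⟨fun i => (hc.1 i).trans (h i), fun x y hx hy =>
    hc.2 x y (fun i => (h i).trans (hx i)) (fun i => (h i).trans (hy i))⟩

lemma IsIntPt.add {d : ℕ} {x v : Fin d → ℝ} (hx : IsIntPt x) (hv : IsIntPt v) :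
    IsIntPt (x + v) := by
  intro i
  obtain ⟨a, ha⟩ := hx i
  obtain ⟨b, hb⟩ := hv i
  exact ⟨a + b, by simp [ha, hb]⟩

lemma IsIntPt.neg {d : ℕ} {v : Fin d → ℝ} (hv : IsIntPt v) : IsIntPt (-v) := by
  intro i
  obtain ⟨b, hb⟩ := hv i
  exact ⟨-b, by simp [hb]⟩

lemma ZConn.add {d : ℕ} {D D' : Set (Fin d → ℝ)} {x y v : Fin d → ℝ} (hv : IsIntPt v)
    (hD : ∀ z ∈ D, z + v ∈ D') (h : ZConn D x y) : ZConn D' (x + v) (y + v) := by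
  obtain ⟨N, p, h0, hN, hp, hs⟩ := h
  refine ⟨N, fun k => p k + v, by simp [h0], by simp [hN],
    fun k hk => ⟨hD _ (hp k hk).1, (hp k hk).2.add hv⟩, fun k hk => ?_⟩
  obtain ⟨j, hj | hj⟩ := hs k hk
  · exact ⟨j, Or.inl (by funext i; simp only [hj, Pi.add_apply]; ring)⟩
  · exact ⟨j, Or.inr (by funext i; simp only [hj, Pi.add_apply]; ring)⟩

lemma cone_add {l : ℕ} {b x v : Fin (l - 1) → ℝ} (hx : x ∈ cone l b) :
    x + v ∈ cone l (b + (cartanA l).mulVec v) := by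
  intro i
  rw [Matrix.mulVec_add]
  exact add_le_add_left (hx i) _

/-- Translating paths by an integer vector `v` shows `A(b) + A·v ⊆ A(b + A·v)`. -/
lemma calA_shift {l : ℕ} {b c v : Fin (l - 1) → ℝ} (hv : IsIntPt v) (hc : c ∈ calA l b) :
    c + (cartanA l).mulVec v ∈ calA l (b + (cartanA l).mulVec v) := by
  refine ⟨fun i => add_le_add_left (hc.1 i) _, fun x y hx hy ix iy => ?_⟩
  have key : ∀ z ∈ cone l (b + (cartanA l).mulVec v), z + -v ∈ cone l b := by
    intro z hz
    have := cone_add (v := -v) hz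
    rwa [Matrix.mulVec_neg, add_neg_cancel_right] at this
  have := (hc.2 _ _ (key x hx) (key y hy) (ix.add hv.neg) (iy.add hv.neg)).add hv
    (fun z hz => cone_add hz)
  simpa using this

/-- For a sequence `f` vanishing at `0` and `l`, the Cartan matrix acts as the negative second
difference; the boundary conditions account for the missing neighbours of the end nodes. -/
lemma cartanA_mulVec {l : ℕ} (f : ℕ → ℝ) (h0 : f 0 = 0) (hl : f l = 0) (i : Fin (l - 1)) :
    (cartanA l).mulVec (fun j => f (j.val + 1)) i
      = 2 * f (i.val + 1) - f i.val - f (i.val + 2) := by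
  have hi := i.isLt
  have e : ∀ j : Fin (l - 1), cartanA l i j * f (j.val + 1) =
      (if i.val = j.val then 2 * f (j.val + 1) else 0)
        - (if i.val = j.val + 1 then f (j.val + 1) else 0)
        - (if i.val + 1 = j.val then f (j.val + 1) else 0) := by
    intro j
    simp only [cartanA, Matrix.of_apply, Fin.ext_iff]
    split_ifs <;> first | omega | ring
  simp only [Matrix.mulVec, dotProduct, e, Finset.sum_sub_distrib]
  rw [Fin.sum_univ_eq_sum_range (fun j => if i.val = j then 2 * f (j + 1) else 0),
    Fin.sum_univ_eq_sum_range (fun j => if i.val = j + 1 then f (j + 1) else 0),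
    Fin.sum_univ_eq_sum_range (fun j => if i.val + 1 = j then f (j + 1) else 0),
    Finset.sum_ite_eq, Finset.sum_ite_eq]
  have h1 : ∑ j ∈ Finset.range (l - 1), (if i.val = j + 1 then f (j + 1) else 0) = f i.val := by
    rcases hk : i.val with _ | k
    · simp [h0]
    · simp only [Nat.add_right_cancel_iff]
      rw [Finset.sum_ite_eq, if_pos (by simp; omega)]
  have h2 : (if i.val + 1 ∈ Finset.range (l - 1) then f (i.val + 1 + 1) else 0)
      = f (i.val + 2) := by
    split_ifs with h
    · rfl
    · rw [show i.val + 2 = l by simp at h; omega, hl]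
  rw [h1, h2, if_pos (by simp)]

/-- For every integer `k` the vector `(lk, …, lk)` is the image under the Cartan matrix of an
integer vector, namely the one with entries `k·l·i(l−i)/2`. -/
lemma exists_int_preimage (l : ℕ) (k : ℤ) : ∃ v : Fin (l - 1) → ℝ, IsIntPt v ∧
    (cartanA l).mulVec v = fun _ => (l : ℝ) * k := by
  let f : ℕ → ℝ := fun i => (k : ℝ) * l * (i * (l - i)) / 2
  refine ⟨fun j => f (j.val + 1), fun j => ?_, funext fun i => ?_⟩
  · have hd : (2 : ℤ) ∣ (l : ℤ) * (((j.val + 1 : ℕ) : ℤ) * (l - ((j.val + 1 : ℕ) : ℤ))) := by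
      generalize ((j.val + 1 : ℕ) : ℤ) = a
      rw [← even_iff_two_dvd]
      simp only [Int.even_mul, Int.even_sub]
      tauto
    obtain ⟨q, hq⟩ := hd
    refine ⟨k * q, ?_⟩
    have hq' := congrArg (Int.cast : ℤ → ℝ) hq
    push_cast at hq'
    simp only [f]
    push_cast
    linear_combination (k : ℝ) / 2 * hq'
  · rw [cartanA_mulVec f (by simp [f]) (by simp [f])]
    simp only [f]
    push_cast
    ring

lemma minSet_shift {l : ℕ} (hl : 2 ≤ l) {b : Fin (l - 1) → ℝ} (k : ℤ) {a : ℤ}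
    (ha : a ∈ minSet l hl b) : (l : ℤ) * k + a ∈ minSet l hl (b + fun _ => (l : ℝ) * k) := by
  obtain ⟨c, hc, rfl⟩ := ha
  obtain ⟨v, hv, hAv⟩ := exists_int_preimage l k
  have h := calA_shift hv hc
  rw [hAv] at h
  refine ⟨fun i => (l : ℤ) * k + c i, ?_, ?_⟩
  · convert h using 1
    funext i
    simp [add_comm]
  · apply le_antisymm
    · refine Finset.le_inf' _ _ fun i hi => ?_
      have := Finset.inf'_le c hi
      omega
    · obtain ⟨i, hi, he⟩ := Finset.exists_mem_eq_inf'
        (⟨⟨0, by omega⟩, Finset.mem_univ _⟩ : (Finset.univ : Finset (Fin (l - 1))).Nonempty) c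
      rw [he]
      exact Finset.inf'_le (fun i => (l : ℤ) * k + c i) hi

/-- If `m M` is, for each `M ∈ ℕ`, the maximum over integer points `c` of `A(b(M))` of
the minimal entry of `c`, then the sequence `(m_M)` is increasing and
`m_{nlM} = lM + m_0` for every `M ∈ ℕ`. -/
theorem stmt_14 (n l : ℕ) (hn : 2 ≤ n) (hl : 2 ≤ l) (s : ℤ)
    (r : Fin l → ℤ)
    (hr : (∑ i, r i = s) ∧ (∀ i j : Fin l, i ≤ j → r j ≤ r i) ∧
          r ⟨0, by omega⟩ - r ⟨l - 1, by omega⟩ ≤ (n : ℤ))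
    (m : ℕ → ℤ)
    (hm : ∀ M : ℕ, IsGreatest (minSet l hl (bvec n l r (M : ℤ))) (m M)) :
    Monotone m ∧ ∀ M : ℕ, m (n * l * M) = (l : ℤ) * (M : ℤ) + m 0 := by
  have hn0 : (0 : ℝ) < n := by exact_mod_cast (by omega : 0 < n)
  refine ⟨fun M M' hMM' => ?_, fun M => ?_⟩
  · obtain ⟨c, hc, hv⟩ := (hm M).1
    refine (hm M').2 ⟨c, calA_mono (fun i => ?_) hc, hv⟩
    have : (M : ℝ) ≤ M' := by exact_mod_cast hMM'
    simp only [bvec]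
    push_cast
    gcongr
  · have hb : bvec n l r ((n * l * M : ℕ) : ℤ)
        = bvec n l r ((0 : ℕ) : ℤ) + fun _ => (l : ℝ) * ((M : ℤ) : ℝ) := by
      funext i
      simp only [bvec, Pi.add_apply]
      push_cast
      field_simp
      ring
    have hb' : bvec n l r ((0 : ℕ) : ℤ)
        = bvec n l r ((n * l * M : ℕ) : ℤ) + fun _ => (l : ℝ) * ((-M : ℤ) : ℝ) := by
      rw [hb]
      funext i
      simp
    have h1 := minSet_shift hl (M : ℤ) (hm 0).1
    rw [← hb] at h1
    have h2 := minSet_shift hl (-M : ℤ) (hm (n * l * M)).1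
    rw [← hb'] at h2
    have h3 := (hm (n * l * M)).2 h1
    have h4 := (hm 0).2 h2
    linarith
end
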